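/- arXiv:2412.17318 — 2 statements merged into one kernel-verified Lean document; each statement's English description precedes it below -/
import Mathlib

section
/- Let V be a real reflexive Banach space, let V₁, …, V_N be closed subspaces of V, let F : V → ℝ be convex and Gâteaux differentiable with Gâteaux derivative F' : V → V*, and let 𝒩 be a closed subspace of V such that F(v + φ) = F(v) for all v ∈ V and φ ∈ 𝒩. Let τ > 0 satisfy the strengthened convexity condition, and let (u^n), (w_j^{n+1}) be generated by the PSC iteration with exact local problems from an initial point u⁰ ∈ V. Then for every n ≥ 0, every w ∈ V, every φ ∈ 𝒩, and every choice of w_j ∈ V_j (j = 1, …, N) with Σ_{j=1}^N w_j = w + φ, one has F(u^{n+1}) ≤ F(u^n) + τ·(⟨F'(u^n), w⟩ + Σ_{j=1}^N d_F(w_j; u^n)). -/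
/-- `f` is the Gâteaux derivative of `F` at `v`. -/
def HasGateauxDerivAt {V : Type*} [NormedAddCommGroup V] [NormedSpace ℝ V]
    (F : V → ℝ) (f : V →L[ℝ] ℝ) (v : V) : Prop :=
  ∀ w : V, Filter.Tendsto (fun t : ℝ => (F (v + t • w) - F v) / t)
    (nhdsWithin (0 : ℝ) {(0 : ℝ)}ᶜ) (nhds (f w))

/-!
The strengthened convexity condition bounds the change of `F` over one parallel step by `τ` times
the sum of the changes along the individual corrections. Each exact local correction does at least
as well as any competitor `z j` in its subspace, so the `z j` may be substituted for the
minimizers. Writing `F (u + z j) - F u` as its linear part plus a Bregman distance, the linear parts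
add up to `F' u (∑ j, z j)`, in which the kernel component `φ` disappears because `F` is constant
along `φ`.
-/

theorem HasGateauxDerivAt.apply_eq_zero_of_forall_eq {V : Type*} [NormedAddCommGroup V]
    [NormedSpace ℝ V] {F : V → ℝ} {f : V →L[ℝ] ℝ} {v φ : V} (hf : HasGateauxDerivAt F f v)
    (hφ : ∀ t : ℝ, F (v + t • φ) = F v) : f φ = 0 :=
  tendsto_nhds_unique (hf φ) <| by
    simpa only [hφ, sub_self, zero_div] using tendsto_const_nhds

section VectorSpace

variable {ι V : Type*} [AddCommGroup V]

/-- The Bregman distance `d_F(w; v)`, where `f` plays the role of the derivative of `F` at `v`.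
The increment `w`, not the endpoint `v + w`, is the last argument. -/
def bregmanDist (F f : V → ℝ) (v w : V) : ℝ :=
  F (v + w) - F v - f w

theorem map_sum_add_sum_bregmanDist {G : Type*} [FunLike G V ℝ] [AddMonoidHomClass G V ℝ]
    (F : V → ℝ) (f : G) (v : V) (s : Finset ι) (w : ι → V) :
    f (∑ j ∈ s, w j) + ∑ j ∈ s, bregmanDist F f v (w j) = ∑ j ∈ s, (F (v + w j) - F v) := by
  simp only [bregmanDist, map_sum, ← Finset.sum_add_distrib, add_sub_cancel]

variable [Fintype ι] [Module ℝ V]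

/-- The strengthened convexity condition with parameter `τ`. The correction spaces are encoded as
arbitrary sets `W j`, so that constrained corrections are covered as well. -/
def StrengthenedConvexity (F : V → ℝ) (W : ι → Set V) (τ : ℝ) : Prop :=
  ∀ (v : V) (w : ι → V), (∀ j, w j ∈ W j) →
    F (v + τ • ∑ j, w j) ≤ (1 - τ * Fintype.card ι) * F v + τ * ∑ j, F (v + w j)

/-- One step `u ↦ u'` of the parallel subspace correction method with exact local problems. It is a
relation because the local minimizers need not be unique. -/
def IsExactPSCStep (F : V → ℝ) (W : ι → Set V) (τ : ℝ) (u u' : V) : Prop :=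
  ∃ w : ι → V, (∀ j, w j ∈ W j) ∧ (∀ j, IsMinOn (fun x => F (u + x)) (W j) (w j)) ∧
    u' = u + τ • ∑ j, w j

variable {F : V → ℝ} {W : ι → Set V} {τ : ℝ}

theorem StrengthenedConvexity.le_add_mul_sum_sub (hF : StrengthenedConvexity F W τ) (v : V)
    {w : ι → V} (hw : ∀ j, w j ∈ W j) :
    F (v + τ • ∑ j, w j) ≤ F v + τ * ∑ j, (F (v + w j) - F v) :=
  calc
    F (v + τ • ∑ j, w j) ≤ (1 - τ * Fintype.card ι) * F v + τ * ∑ j, F (v + w j) := hF v w hw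
    _ = F v + τ * ∑ j, (F (v + w j) - F v) := by
      rw [Finset.sum_sub_distrib, Finset.sum_const, Finset.card_univ, nsmul_eq_mul]
      ring

theorem IsExactPSCStep.le_add_mul_sum_sub {u u' : V} (hu : IsExactPSCStep F W τ u u')
    (hF : StrengthenedConvexity F W τ) (hτ : 0 ≤ τ) {z : ι → V} (hz : ∀ j, z j ∈ W j) :
    F u' ≤ F u + τ * ∑ j, (F (u + z j) - F u) := by
  obtain ⟨w, hw, hmin, rfl⟩ := hu
  calc
    F (u + τ • ∑ j, w j) ≤ F u + τ * ∑ j, (F (u + w j) - F u) := hF.le_add_mul_sum_sub u hw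
    _ ≤ F u + τ * ∑ j, (F (u + z j) - F u) := by
      gcongr with j
      exact hmin j (hz j)

end VectorSpace

theorem stmt_3_general {ι V : Type*} [Fintype ι] [NormedAddCommGroup V] [NormedSpace ℝ V]
    {F : V → ℝ} {f : V →L[ℝ] ℝ} {W : ι → Set V} {τ : ℝ} {u u' z φ : V} {w : ι → V}
    (hf : HasGateauxDerivAt F f u) (hφ : ∀ t : ℝ, F (u + t • φ) = F u) (hτ : 0 ≤ τ)
    (hF : StrengthenedConvexity F W τ) (hu : IsExactPSCStep F W τ u u')
    (hw : ∀ j, w j ∈ W j) (hsum : ∑ j, w j = z + φ) :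
    F u' ≤ F u + τ * (f z + ∑ j, bregmanDist F f u (w j)) := by
  have hfz : f (∑ j, w j) = f z := by
    rw [hsum, map_add, hf.apply_eq_zero_of_forall_eq hφ, add_zero]
  rw [← hfz, map_sum_add_sum_bregmanDist]
  exact hu.le_add_mul_sum_sub hF hτ hw

/-- descent property of the parallel subspace correction (PSC) method for
semicoercive convex problems. -/
theorem stmt_3 {V : Type*} [NormedAddCommGroup V] [NormedSpace ℝ V] [CompleteSpace V]
    (hrefl : Function.Surjective (NormedSpace.inclusionInDoubleDual ℝ V))
    (N : ℕ) (Vj : Fin N → Submodule ℝ V) (hVjc : ∀ j, IsClosed ((Vj j : Set V)))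
    (F : V → ℝ) (hconv : ConvexOn ℝ Set.univ F)
    (F' : V → V →L[ℝ] ℝ) (hF' : ∀ v : V, HasGateauxDerivAt F (F' v) v)
    (𝒩 : Submodule ℝ V) (h𝒩c : IsClosed ((𝒩 : Set V)))
    (hinv : ∀ v : V, ∀ φ ∈ 𝒩, F (v + φ) = F v)
    (τ : ℝ) (hτ : 0 < τ)
    (hsc : ∀ (v : V) (z : Fin N → V), (∀ j, z j ∈ Vj j) →
      (1 - τ * (N : ℝ)) * F v + τ * ∑ j, F (v + z j) ≥ F (v + τ • ∑ j, z j))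
    (u : ℕ → V) (w : ℕ → Fin N → V)
    (hwmem : ∀ n j, w n j ∈ Vj j)
    (hwmin : ∀ n j, ∀ x ∈ Vj j, F (u n + w n j) ≤ F (u n + x))
    (hupd : ∀ n : ℕ, u (n + 1) = u n + τ • ∑ j, w n j) :
    ∀ n : ℕ, ∀ (z φ : V), φ ∈ 𝒩 → ∀ wj : Fin N → V, (∀ j, wj j ∈ Vj j) →
      (∑ j, wj j) = z + φ →
      F (u (n + 1)) ≤ F (u n) +
        τ * (F' (u n) z + ∑ j, (F (u n + wj j) - F (u n) - F' (u n) (wj j))) := by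
  intro n z φ hφ wj hwj hsum
  have hF : StrengthenedConvexity F (fun j => (Vj j : Set V)) τ := fun v z hz => by
    simpa only [Fintype.card_fin] using hsc v z hz
  exact stmt_3_general (hF' (u n)) (fun t => hinv _ _ (𝒩.smul_mem t hφ)) hτ.le hF
    ⟨w n, hwmem n, hwmin n, hupd n⟩ hwj hsum
end

section
/- Let V be a real reflexive Banach space, V₁, …, V_N closed subspaces of V, F : V → ℝ convex and Gâteaux differentiable with Gâteaux derivative F', and 𝒩 a closed subspace of V with F(v + φ) = F(v) for all v ∈ V, φ ∈ 𝒩. For each j and each v ∈ V let F_j(·; v) : V_j → ℝ be convex and Gâteaux differentiable with derivative F_j'(·; v), satisfying F_j(0; v) = F(v) and ⟨F_j'(0; v), x⟩ = ⟨F'(v), x⟩ for all x ∈ V_j; define d_j(w_j; v) := F_j(w_j; v) − F(v) − ⟨F'(v), w_j⟩ and ⟨d_j'(w_j; v), x⟩ := ⟨F_j'(w_j; v), x⟩ − ⟨F'(v), x⟩. Suppose there exist ρ ≥ 1 and ω > 0 with either ω ∈ (0, 1] or 1 < ω < ρ, such that for all j, v, and w_j ∈ V_j: d_F(w_j; v)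 ≤ ω·d_j(w_j; v) and ⟨d_j'(w_j; v), w_j⟩ ≥ ρ·d_j(w_j; v). Let τ > 0 satisfy the strengthened convexity condition, and let (u^n) be generated by the PSC iteration with these (inexact) local problems from u⁰ ∈ V: w_j^{n+1} minimizes F_j(·; u^n) over V_j and u^{n+1} = u^n + τ·Σ_{j=1}^N w_j^{n+1}. Set θ = 1 if ω ∈ (0, 1] and θ = (ρ − ω)/(ρ − 1) if ω ∈ (1, ρ). Then for every n ≥ 0, every w ∈ V, every φ ∈ 𝒩, and every choice of w_j ∈ V_j with Σ_{j=1}^N w_j = w + φ: F(u^{n+1}) ≤ F(u^n) + τθ·(⟨F'(u^n), w⟩ + Σ_{j=1}^N d_j(w_j; u^n)). -/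
namespace HasGateauxDerivAt

variable {V : Type*} [NormedAddCommGroup V] [NormedSpace ℝ V] {F : V → ℝ} {f : V →L[ℝ] ℝ} {v w : V}

theorem hasLineDerivAt (h : HasGateauxDerivAt F f v) (w : V) : HasLineDerivAt ℝ F (f w) v w := by
  simpa only [hasLineDerivAt_iff_tendsto_slope_zero, smul_eq_mul, div_eq_inv_mul] using h w

theorem apply_eq_zero_of_forall_le (h : HasGateauxDerivAt F f v)
    (hmin : ∀ t : ℝ, F v ≤ F (v + t • w)) : f w = 0 := by
  have hline : IsMinOn F (Set.range fun t : ℝ ↦ v + t • w) v :=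
    isMinOn_iff.2 (Set.forall_mem_range.2 hmin)
  exact hline.hasLineDerivAt_eq_zero (h.hasLineDerivAt w) (.of_forall Set.mem_range_self)

theorem apply_le_sub_of_convexOn {s : Set V} (h : HasGateauxDerivAt F f v) (hF : ConvexOn ℝ s F)
    (hv : v ∈ s) (hvw : v + w ∈ s) : f w ≤ F (v + w) - F v := by
  have hline : ConvexOn ℝ (AffineMap.lineMap v (v + w) ⁻¹' s) fun t : ℝ ↦ F (v + t • w) := by
    simpa [Function.comp_def, AffineMap.lineMap_apply, add_comm] using
      hF.comp_affineMap (AffineMap.lineMap v (v + w) : ℝ →ᵃ[ℝ] V)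
  simpa [slope_def_field] using
    hline.le_slope_of_hasDerivAt (x := 0) (y := 1) (by simpa using hv) (by simpa using hvw)
      one_pos (h.hasLineDerivAt w)

end HasGateauxDerivAt

theorem add_le_mul_add_of_mul_sub_one_le {R : Type*} [CommRing R] [LinearOrder R]
    [IsStrictOrderedRing R] {a d D ρ ω θ : R} (hd : 0 ≤ d) (hD : D ≤ ω * d) (ha : ρ * d ≤ -a)
    (hθ_le : θ ≤ 1) (hθ : θ * (ρ - 1) ≤ ρ - ω) : a + D ≤ θ * (a + d) := by
  calc
    a + D = θ * a + (1 - θ) * a + D := by ring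
    _ ≤ θ * a + (1 - θ) * (-(ρ * d)) + ω * d := by
      gcongr
      exact le_neg_of_le_neg ha
    _ = θ * (a + d) + (θ * (ρ - 1) - (ρ - ω)) * d := by ring
    _ ≤ θ * (a + d) :=
      add_le_of_nonpos_right (mul_nonpos_of_nonpos_of_nonneg (sub_nonpos.2 hθ) hd)

theorem dampingFactor_bounds {K : Type*} [Field K] [LinearOrder K] [IsStrictOrderedRing K]
    {ρ ω θ : K} (hω : ω ≤ 1 ∨ (1 < ω ∧ ω < ρ))
    (hθ_one : ω ≤ 1 → θ = 1) (hθ_div : 1 < ω → θ = (ρ - ω) / (ρ - 1)) :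
    0 ≤ θ ∧ θ ≤ 1 ∧ θ * (ρ - 1) ≤ ρ - ω := by
  rcases hω with hω | ⟨hω, hωρ⟩
  · rw [hθ_one hω]
    exact ⟨zero_le_one, le_rfl, by linarith⟩
  · have hρ : 0 < ρ - 1 := by linarith
    rw [hθ_div hω]
    exact ⟨div_nonneg (by linarith) hρ.le, (div_le_one hρ).2 (by linarith),
      (div_mul_cancel₀ _ hρ.ne').le⟩

theorem apply_add_sum_sub_apply {M A G ι : Type*} [AddCommMonoid M] [AddCommGroup A]
    [FunLike G M A] [AddMonoidHomClass G M A] (s : Finset ι) (g : G) (a : ι → A) {x : ι → M}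
    {z φ : M} (hx : ∑ j ∈ s, x j = z + φ) (hφ : g φ = 0) :
    g z + ∑ j ∈ s, (a j - g (x j)) = ∑ j ∈ s, a j := by
  rw [Finset.sum_sub_distrib, ← map_sum, hx, map_add, hφ, add_zero, add_sub_cancel]

theorem apply_add_smul_sum_le {V ι : Type*} [AddCommMonoid V] [SMul ℝ V] [Fintype ι]
    {F : V → ℝ} {v : V} {w : ι → V} {b : ι → ℝ} {τ θ : ℝ} (hτ : 0 ≤ τ)
    (hsc : F (v + τ • ∑ j, w j) ≤ (1 - τ * Fintype.card ι) * F v + τ * ∑ j, F (v + w j))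
    (hdecr : ∀ j, F (v + w j) - F v ≤ θ * b j) :
    F (v + τ • ∑ j, w j) ≤ F v + τ * θ * ∑ j, b j := by
  calc
    F (v + τ • ∑ j, w j) ≤ (1 - τ * Fintype.card ι) * F v + τ * ∑ j, F (v + w j) := hsc
    _ = F v + τ * ∑ j, (F (v + w j) - F v) := by
      simp only [Finset.sum_sub_distrib, Finset.sum_const, Finset.card_univ, nsmul_eq_mul]
      ring
    _ ≤ F v + τ * ∑ j, θ * b j := by gcongr with j; exact hdecr j
    _ = F v + τ * θ * ∑ j, b j := by rw [← Finset.mul_sum, mul_assoc]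

section Descent

variable {V : Type*} [NormedAddCommGroup V] [NormedSpace ℝ V] {F : V → ℝ} {F' : V →L[ℝ] ℝ} {v : V}

theorem sub_le_mul_sub_of_localMinimizer {W : Submodule ℝ V} (hF : ConvexOn ℝ Set.univ F)
    (hF' : HasGateauxDerivAt F F' v) {f : W → ℝ} {f' : W →L[ℝ] ℝ} {w : W}
    (hf' : HasGateauxDerivAt f f' w) (hmin : ∀ x, f w ≤ f x) {ρ ω θ : ℝ} (hω : 0 < ω)
    (hstab : F (v + w) - F v - F' w ≤ ω * (f w - F v - F' w))
    (hrho : ρ * (f w - F v - F' w) ≤ f' w - F' w)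
    (hθ_nonneg : 0 ≤ θ) (hθ_le : θ ≤ 1) (hθ : θ * (ρ - 1) ≤ ρ - ω) (x : W) :
    F (v + w) - F v ≤ θ * (f x - F v) := by
  have hbregman : F' w ≤ F (v + w) - F v :=
    hF'.apply_le_sub_of_convexOn hF (Set.mem_univ _) (Set.mem_univ _)
  have hd : 0 ≤ f w - F v - F' w :=
    nonneg_of_mul_nonneg_right ((sub_nonneg.2 hbregman).trans hstab) hω
  have hstationary : f' w = 0 := hf'.apply_eq_zero_of_forall_le fun _ ↦ hmin _
  rw [hstationary, zero_sub] at hrho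
  calc
    F (v + w) - F v ≤ θ * (f w - F v) := by
      simpa only [add_sub_cancel] using
        add_le_mul_add_of_mul_sub_one_le hd hstab hrho hθ_le hθ
    _ ≤ θ * (f x - F v) := by gcongr; exact hmin x

theorem stmt_17_general {ι : Type*} [Fintype ι] {Vj : ι → Submodule ℝ V}
    (hF : ConvexOn ℝ Set.univ F) (hF' : HasGateauxDerivAt F F' v)
    {𝒩 : Submodule ℝ V} (hinv : ∀ φ ∈ 𝒩, F (v + φ) = F v)
    {f : (j : ι) → Vj j → ℝ} {f' : (j : ι) → Vj j →L[ℝ] ℝ} {w : (j : ι) → Vj j}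
    (hf' : ∀ j, HasGateauxDerivAt (f j) (f' j) (w j)) (hmin : ∀ j x, f j (w j) ≤ f j x)
    {ρ ω : ℝ} (hω : 0 < ω)
    (hstab : ∀ j, F (v + w j) - F v - F' (w j) ≤ ω * (f j (w j) - F v - F' (w j)))
    (hrho : ∀ j, ρ * (f j (w j) - F v - F' (w j)) ≤ f' j (w j) - F' (w j))
    {τ : ℝ} (hτ : 0 ≤ τ)
    (hsc : F (v + τ • ∑ j, (w j : V)) ≤
      (1 - τ * Fintype.card ι) * F v + τ * ∑ j, F (v + w j))
    {θ : ℝ} (hθ_nonneg : 0 ≤ θ) (hθ_le : θ ≤ 1) (hθ : θ * (ρ - 1) ≤ ρ - ω)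
    {z φ : V} (hφ : φ ∈ 𝒩) {x : (j : ι) → Vj j} (hx : ∑ j, (x j : V) = z + φ) :
    F (v + τ • ∑ j, (w j : V)) ≤
      F v + τ * θ * (F' z + ∑ j, (f j (x j) - F v - F' (x j))) := by
  have hF'φ : F' φ = 0 :=
    hF'.apply_eq_zero_of_forall_le fun t ↦ (hinv _ (𝒩.smul_mem t hφ)).ge
  have hsum : F' z + ∑ j, (f j (x j) - F v - F' (x j)) = ∑ j, (f j (x j) - F v) :=
    apply_add_sum_sub_apply _ F' _ hx hF'φ
  rw [hsum]
  exact apply_add_smul_sum_le hτ hsc fun j ↦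
    sub_le_mul_sub_of_localMinimizer hF hF' (hf' j) (hmin j) hω (hstab j) (hrho j)
      hθ_nonneg hθ_le hθ (x j)

end Descent

/-- descent property of the PSC method with inexact local problems
(Lemma A.4). -/
theorem stmt_17 {V : Type*} [NormedAddCommGroup V] [NormedSpace ℝ V] [CompleteSpace V]
    (hrefl : Function.Surjective (NormedSpace.inclusionInDoubleDual ℝ V))
    (N : ℕ) (Vj : Fin N → Submodule ℝ V) (hVjc : ∀ j, IsClosed ((Vj j : Set V)))
    (F : V → ℝ) (hconv : ConvexOn ℝ Set.univ F)
    (F' : V → V →L[ℝ] ℝ) (hF' : ∀ v : V, HasGateauxDerivAt F (F' v) v)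
    (𝒩 : Submodule ℝ V) (h𝒩c : IsClosed ((𝒩 : Set V)))
    (hinv : ∀ v : V, ∀ φ ∈ 𝒩, F (v + φ) = F v)
    (Fj : (j : Fin N) → V → (Vj j) → ℝ)
    (Fj' : (j : Fin N) → V → (Vj j) → ((Vj j) →L[ℝ] ℝ))
    (hFjconv : ∀ (j : Fin N) (v : V), ConvexOn ℝ Set.univ (Fj j v))
    (hFj' : ∀ (j : Fin N) (v : V) (x : Vj j), HasGateauxDerivAt (Fj j v) (Fj' j v x) x)
    (hcons0 : ∀ (j : Fin N) (v : V), Fj j v 0 = F v)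
    (hcons1 : ∀ (j : Fin N) (v : V) (x : Vj j), Fj' j v 0 x = F' v (x : V))
    (ρ ω : ℝ) (hρ : 1 ≤ ρ) (hω0 : 0 < ω) (hωcase : ω ≤ 1 ∨ (1 < ω ∧ ω < ρ))
    (hstab : ∀ (j : Fin N) (v : V) (wj : Vj j),
      F (v + (wj : V)) - F v - F' v (wj : V) ≤
        ω * (Fj j v wj - F v - F' v (wj : V)))
    (hrho : ∀ (j : Fin N) (v : V) (wj : Vj j),
      ρ * (Fj j v wj - F v - F' v (wj : V)) ≤ Fj' j v wj wj - F' v (wj : V))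
    (τ : ℝ) (hτ : 0 < τ)
    (hsc : ∀ (v : V) (z : Fin N → V), (∀ j, z j ∈ Vj j) →
      (1 - τ * (N : ℝ)) * F v + τ * ∑ j, F (v + z j) ≥ F (v + τ • ∑ j, z j))
    (u : ℕ → V) (wh : (n : ℕ) → (j : Fin N) → Vj j)
    (hwhmin : ∀ (n : ℕ) (j : Fin N), ∀ x : Vj j, Fj j (u n) (wh n j) ≤ Fj j (u n) x)
    (hupd : ∀ n : ℕ, u (n + 1) = u n + τ • ∑ j, ((wh n j : V)))
    (θ : ℝ) (hθ1 : ω ≤ 1 → θ = 1) (hθ2 : 1 < ω → θ = (ρ - ω) / (ρ - 1)) :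
    ∀ n : ℕ, ∀ (z φ : V), φ ∈ 𝒩 → ∀ wj : (j : Fin N) → Vj j,
      (∑ j, ((wj j : V))) = z + φ →
      F (u (n + 1)) ≤ F (u n) + τ * θ *
        (F' (u n) z + ∑ j, (Fj j (u n) (wj j) - F (u n) - F' (u n) (wj j : V))) := by
  intro n z φ hφ wj hsum
  obtain ⟨hθ_nonneg, hθ_le, hθ⟩ := dampingFactor_bounds hωcase hθ1 hθ2
  rw [hupd n]
  exact stmt_17_general hconv (hF' (u n)) (hinv (u n)) (fun j ↦ hFj' j (u n) (wh n j))
    (hwhmin n) hω0 (fun j ↦ hstab j (u n) (wh n j)) (fun j ↦ hrho j (u n) (wh n j)) hτ.le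
    (by simpa only [Fintype.card_fin] using hsc (u n) _ fun j ↦ (wh n j).2)
    hθ_nonneg hθ_le hθ hφ hsum
end
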